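/- arXiv:math/0004121 — 2 statements merged into one kernel-verified Lean document; each statement's English description precedes it below -/
import Mathlib

section
/- (Example 3.3, eqs. (3.26)–(3.27)) Let X be a finite set, let P₁, P₂, P̄ be probability distributions on X with P̄(x) > 0 for all x ∈ X, let α₁, α₂ > 0 with α₁ + α₂ = 1, and let the null hypothesis be the mixed source P_n = α₁ P₁^{⊗n} + α₂ P₂^{⊗n} and the alternative hypothesis be Q_n = P̄^{⊗n} on X^n. Then: (a) for every r > 0, B_e(r) ≤ min(D(P₁‖P̄), D(P₂‖P̄)); and (b) lim_{r↓0} B_e(r) = min(D(P₁‖P̄), D(P₂‖P̄)), where D denotes the Kullback–Leibler divergence (natural logarithm). -/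
open MeasureTheory Filter
open scoped ENNReal NNReal

/-- The exponent `-(1/n) log p` of a nonneg extended real `p`, valued in `EReal`,
with the conventions `-log 0 = +∞` and `-log ∞ = -∞`. -/
noncomputable def expRate (n : ℕ) (p : ℝ≥0∞) : EReal :=
  (((n : ℝ)⁻¹ : ℝ) : EReal) * (-(ENNReal.log p))

/-- The likelihood ratio `dμ/dν`, defined to be `+∞` on the part of the space where
`μ` is singular with respect to `ν` (μ-a.e.). -/
noncomputable def lratio {Ω : Type*} [MeasurableSpace Ω] (μ ν : Measure Ω) (x : Ω) : ℝ≥0∞ :=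
  μ.rnDeriv (μ + ν) x / ν.rnDeriv (μ + ν) x

section Setup

variable {Ω : ℕ → Type*} [∀ n, MeasurableSpace (Ω n)]

/-- `η(R) = liminf_n -(1/n) log P_n{ (1/n) log dP_n/dQ_n ≤ R }`. -/
noncomputable def eta (P Q : ∀ n, Measure (Ω n)) (R : ℝ) : EReal :=
  Filter.atTop.liminf fun n =>
    expRate n ((P n) {x | lratio (P n) (Q n) x ≤ ENNReal.ofReal (Real.exp (n * R))})

/-- `E` is `r`-achievable: there are measurable acceptance regions `A n` with
`liminf -(1/n) log μ_n ≥ r` and `liminf -(1/n) log λ_n ≥ E`. -/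
def rAchievable (P Q : ∀ n, Measure (Ω n)) (r E : ℝ) : Prop :=
  ∃ A : ∀ n, Set (Ω n), (∀ n, MeasurableSet (A n)) ∧
    (r : EReal) ≤ Filter.atTop.liminf (fun n => expRate n ((P n) (A n)ᶜ)) ∧
    (E : EReal) ≤ Filter.atTop.liminf (fun n => expRate n ((Q n) (A n)))

/-- The optimal error exponent `B_e(r)`: the supremum of all `r`-achievable `E`. -/
noncomputable def Be (P Q : ∀ n, Measure (Ω n)) (r : ℝ) : EReal :=
  sSup {x : EReal | ∃ E : ℝ, rAchievable P Q r E ∧ x = (E : EReal)}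

end Setup

/-- The discrete measure on a finite type given by the weights `p`. -/
noncomputable def wMeasure {X : Type*} [Fintype X] [MeasurableSpace X] (p : X → ℝ) :
    Measure X :=
  ∑ x : X, ENNReal.ofReal (p x) • Measure.dirac x

/-- The Kullback–Leibler divergence `D(q‖p) = ∑ x q(x) log (q(x)/p(x))` between two
probability distributions on a finite set (natural logarithm). -/
noncomputable def KLfin {X : Type*} [Fintype X] (q p : X → ℝ) : ℝ :=
  ∑ x : X, q x * Real.log (q x / p x)

/-!
For a sum of null hypotheses, a union of acceptance regions costs nothing on the exponential scale,
so `B_e` of the mixture is the minimum of the `B_e` of its components, and only one i.i.d. source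
`μ` against one i.i.d. alternative `ν` has to be understood.

* Converse: Fenchel's inequality `t x ≤ klFun x + (exp t - 1)`, integrated over an acceptance region
  `A` with `t = n E`, gives `n E · μⁿ(A) ≤ n D(μ‖ν) + exp (n E) · νⁿ(A)`. If `r > 0` then
  `μⁿ(A) → 1`, hence `E ≤ D(μ‖ν)`.
* Achievability: thresholding the likelihood ratio at `exp (n a)`, the Chernoff bound controls the
  error under `μⁿ` through `∫ (dμ/dν) ^ (1 - s) dν`. By Fatou's lemma for Tsallis relative entropies
  as `s ↓ 0`, this integral is less than `exp (- s a)` for some `s > 0` as soon as `a < D(μ‖ν)`. If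
  `μ` is not absolutely continuous with respect to `ν`, a `ν`-null set charged by `μ` separates the
  hypotheses at every exponent.
-/

open ExpGrowth InformationTheory
open scoped Topology

section ErrorExponents

theorem expRate_eq_neg_log_div (n : ℕ) (p : ℝ≥0∞) : expRate n p = -(ENNReal.log p / n) := by
  rw [expRate, mul_comm, EReal.neg_mul, EReal.div_eq_inv_mul, mul_comm, EReal.coe_inv,
    EReal.coe_natCast]

theorem liminf_expRate (u : ℕ → ℝ≥0∞) :
    liminf (fun n => expRate n (u n)) atTop = -expGrowthSup u := by
  simp only [expRate_eq_neg_log_div]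
  exact EReal.liminf_neg

variable {Ω : ℕ → Type*} [∀ n, MeasurableSpace (Ω n)] {P P' Q : ∀ n, Measure (Ω n)}

theorem rAchievable_iff_expGrowthSup {r E : ℝ} :
    rAchievable P Q r E ↔ ∃ A : ∀ n, Set (Ω n), (∀ n, MeasurableSet (A n)) ∧
      expGrowthSup (fun n => P n (A n)ᶜ) ≤ ((-r : ℝ) : EReal) ∧
      expGrowthSup (fun n => Q n (A n)) ≤ ((-E : ℝ) : EReal) := by
  simp only [rAchievable, liminf_expRate, EReal.le_neg (a := ((_ : ℝ) : EReal)), EReal.coe_neg]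

namespace rAchievable

theorem mono {r r' E E' : ℝ} (h : rAchievable P Q r E) (hr : r' ≤ r) (hE : E' ≤ E) :
    rAchievable P Q r' E' := by
  obtain ⟨A, hA, hP, hQ⟩ := h
  exact ⟨A, hA, (EReal.coe_le_coe_iff.2 hr).trans hP, (EReal.coe_le_coe_iff.2 hE).trans hQ⟩

theorem of_le_smul {r E : ℝ} {c : ℝ≥0∞} (hc : c ≠ ∞) (h : rAchievable P Q r E)
    (hle : ∀ n, P' n ≤ c • P n) : rAchievable P' Q r E := by
  rw [rAchievable_iff_expGrowthSup] at h ⊢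
  obtain ⟨A, hA, hP, hQ⟩ := h
  refine ⟨A, hA, (expGrowthSup_le_of_eventually_le hc ?_).trans hP, hQ⟩
  exact Eventually.of_forall fun n => hle n (A n)ᶜ

end rAchievable

theorem rAchievable_smul_iff {c : ℝ≥0∞} (hc₀ : c ≠ 0) (hc : c ≠ ∞) {r E : ℝ} :
    rAchievable (fun n => c • P n) Q r E ↔ rAchievable P Q r E := by
  refine ⟨fun h => h.of_le_smul (ENNReal.inv_ne_top.2 hc₀) fun n => ?_,
    fun h => h.of_le_smul hc fun n => le_rfl⟩
  rw [smul_smul, ENNReal.inv_mul_cancel hc₀ hc, one_smul]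

theorem rAchievable_add_iff {r E : ℝ} :
    rAchievable (fun n => P n + P' n) Q r E ↔
      rAchievable P Q r E ∧ rAchievable P' Q r E := by
  constructor
  · refine fun h => ⟨h.of_le_smul ENNReal.one_ne_top fun n => ?_,
      h.of_le_smul ENNReal.one_ne_top fun n => ?_⟩ <;> rw [one_smul]
    exacts [Measure.le_add_right le_rfl, Measure.le_add_left le_rfl]
  · simp only [rAchievable_iff_expGrowthSup]
    rintro ⟨⟨A, hA, hPA, hQA⟩, B, hB, hPB, hQB⟩
    refine ⟨fun n => A n ∪ B n, fun n => (hA n).union (hB n), ?_, ?_⟩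
    · calc expGrowthSup (fun n => (P n + P' n) (A n ∪ B n)ᶜ)
          ≤ expGrowthSup ((fun n => P n (A n)ᶜ) + fun n => P' n (B n)ᶜ) :=
            expGrowthSup_monotone fun n => add_le_add
              (measure_mono (Set.compl_subset_compl.2 Set.subset_union_left))
              (measure_mono (Set.compl_subset_compl.2 Set.subset_union_right))
        _ ≤ ((-r : ℝ) : EReal) := expGrowthSup_add.trans_le (sup_le hPA hPB)
    · calc expGrowthSup (fun n => Q n (A n ∪ B n))
          ≤ expGrowthSup ((fun n => Q n (A n)) + fun n => Q n (B n)) :=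
            expGrowthSup_monotone fun n => measure_union_le _ _
        _ ≤ ((-E : ℝ) : EReal) := expGrowthSup_add.trans_le (sup_le hQA hQB)

theorem lt_Be_iff {r : ℝ} {c : EReal} :
    c < Be P Q r ↔ ∃ E : ℝ, c < E ∧ rAchievable P Q r E := by
  simp only [Be, lt_sSup_iff, Set.mem_ofPred_eq]
  constructor
  · rintro ⟨_, ⟨E, hE, rfl⟩, hc⟩
    exact ⟨E, hc, hE⟩
  · rintro ⟨E, hc, hE⟩
    exact ⟨E, ⟨E, hE, rfl⟩, hc⟩

theorem Be_smul {c : ℝ≥0∞} (hc₀ : c ≠ 0) (hc : c ≠ ∞) (r : ℝ) :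
    Be (fun n => c • P n) Q r = Be P Q r := by
  simp only [Be, rAchievable_smul_iff hc₀ hc]

theorem Be_add (r : ℝ) :
    Be (fun n => P n + P' n) Q r = min (Be P Q r) (Be P' Q r) := by
  refine eq_of_forall_lt_iff fun c => ?_
  simp only [lt_min_iff, lt_Be_iff, rAchievable_add_iff]
  constructor
  · rintro ⟨E, hc, hP, hP'⟩
    exact ⟨⟨E, hc, hP⟩, E, hc, hP'⟩
  · rintro ⟨⟨E, hc, hP⟩, E', hc', hP'⟩
    refine ⟨min E E', ?_, hP.mono le_rfl (min_le_left _ _), hP'.mono le_rfl (min_le_right _ _)⟩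
    rcases min_choice E E' with h | h <;> rwa [h]

end ErrorExponents

section KullbackLeibler

variable {X Y : Type*} [MeasurableSpace X] [MeasurableSpace Y]

theorem klDiv_map_measurableEquiv (μ ν : Measure X) [IsFiniteMeasure μ] [IsFiniteMeasure ν]
    (e : X ≃ᵐ Y) : klDiv (μ.map e) (ν.map e) = klDiv μ ν := by
  refine le_antisymm (klDiv_map_le μ ν e.measurable) ?_
  simpa [Measure.map_map e.symm.measurable e.measurable]
    using klDiv_map_le (μ.map e) (ν.map e) e.symm.measurable

theorem klDiv_prod (μ ν : Measure X) (μ' ν' : Measure Y) [IsProbabilityMeasure μ]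
    [IsFiniteMeasure ν] [IsProbabilityMeasure μ'] [IsProbabilityMeasure ν'] :
    klDiv (μ.prod μ') (ν.prod ν') = klDiv μ ν + klDiv μ' ν' := by
  have hswap : klDiv (μ.prod μ') (μ.prod ν') = klDiv (μ'.prod μ) (ν'.prod μ) := by
    rw [← Measure.prod_swap (μ := μ'), ← Measure.prod_swap (μ := ν')]
    exact klDiv_map_measurableEquiv _ _ MeasurableEquiv.prodComm
  rw [← Measure.compProd_const, ← Measure.compProd_const, klDiv_compProd_eq_add,
    Measure.compProd_const, Measure.compProd_const, hswap, ← Measure.compProd_const,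
    ← Measure.compProd_const, klDiv_compProd_left]

theorem klDiv_pi {n : ℕ} {Z : Fin n → Type*} [∀ i, MeasurableSpace (Z i)]
    (μ ν : ∀ i, Measure (Z i)) [∀ i, IsProbabilityMeasure (μ i)]
    [∀ i, IsProbabilityMeasure (ν i)] :
    klDiv (Measure.pi μ) (Measure.pi ν) = ∑ i, klDiv (μ i) (ν i) := by
  induction n with
  | zero => rw [Measure.pi_of_empty, Measure.pi_of_empty, klDiv_self, Fin.sum_univ_zero]
  | succ n ih =>
    rw [← klDiv_map_measurableEquiv _ _ (MeasurableEquiv.piFinSuccAbove Z 0),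
      (measurePreserving_piFinSuccAbove μ 0).map_eq,
      (measurePreserving_piFinSuccAbove ν 0).map_eq, klDiv_prod, ih, Fin.sum_univ_succAbove _ 0]

theorem klDiv_pi_const (μ ν : Measure X) [IsProbabilityMeasure μ] [IsProbabilityMeasure ν]
    (n : ℕ) :
    klDiv (Measure.pi fun _ : Fin n => μ) (Measure.pi fun _ : Fin n => ν) = n * klDiv μ ν := by
  rw [klDiv_pi, Finset.sum_const, Finset.card_univ, Fintype.card_fin, nsmul_eq_mul]

/-- Fenchel's inequality: `t ↦ exp t - 1` is the convex conjugate of `klFun`. -/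
theorem mul_le_klFun_add_exp_sub_one {x : ℝ} (hx : 0 ≤ x) (t : ℝ) :
    t * x ≤ klFun x + (Real.exp t - 1) := by
  rcases hx.eq_or_lt with rfl | hx
  · simp [klFun_zero, Real.exp_nonneg]
  · have h := Real.add_one_le_exp (t - Real.log x)
    rw [Real.exp_sub, Real.exp_log hx, le_div_iff₀ hx] at h
    rw [klFun_apply]
    linarith

/-- The Donsker–Varadhan bound for the test function `t • 1_s`, free of the logarithm of `ν s`. -/
theorem ofReal_mul_measure_le_klDiv_add (μ ν : Measure X) [IsFiniteMeasure μ] [IsFiniteMeasure ν]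
    {t : ℝ} (ht : 0 ≤ t) (s : Set X) :
    ENNReal.ofReal t * μ s ≤ klDiv μ ν + ENNReal.ofReal (Real.exp t - 1) * ν s := by
  by_cases hac : μ ≪ ν
  swap
  · simp [klDiv_of_not_ac hac]
  have hpointwise : ∀ᵐ x ∂ν, ENNReal.ofReal t * μ.rnDeriv ν x ≤
      ENNReal.ofReal (klFun (μ.rnDeriv ν x).toReal) + ENNReal.ofReal (Real.exp t - 1) := by
    filter_upwards [μ.rnDeriv_ne_top ν] with x hx
    rw [← ENNReal.ofReal_toReal hx, ← ENNReal.ofReal_mul ht,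
      ENNReal.toReal_ofReal ENNReal.toReal_nonneg, ← ENNReal.ofReal_add
        (klFun_nonneg ENNReal.toReal_nonneg) (by linarith [Real.add_one_le_exp t])]
    exact ENNReal.ofReal_le_ofReal (mul_le_klFun_add_exp_sub_one ENNReal.toReal_nonneg t)
  calc ENNReal.ofReal t * μ s
      = ∫⁻ x in s, ENNReal.ofReal t * μ.rnDeriv ν x ∂ν := by
        rw [lintegral_const_mul _ (μ.measurable_rnDeriv ν), Measure.setLIntegral_rnDeriv hac]
    _ ≤ ∫⁻ x in s, ENNReal.ofReal (klFun (μ.rnDeriv ν x).toReal)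
          + ENNReal.ofReal (Real.exp t - 1) ∂ν := lintegral_mono_ae (ae_restrict_of_ae hpointwise)
    _ = ∫⁻ x in s, ENNReal.ofReal (klFun (μ.rnDeriv ν x).toReal) ∂ν
          + ENNReal.ofReal (Real.exp t - 1) * ν s := by
        rw [lintegral_add_right _ measurable_const, setLIntegral_const]
    _ ≤ klDiv μ ν + ENNReal.ofReal (Real.exp t - 1) * ν s := by
        rw [klDiv_eq_lintegral_klFun_of_ac hac]
        exact add_le_add_left (setLIntegral_le_lintegral _ _) _

end KullbackLeibler

section WeakConverse

theorem tendsto_zero_of_expGrowthSup_neg {u : ℕ → ℝ≥0∞} (h : expGrowthSup u < 0) :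
    Tendsto u atTop (𝓝 0) := by
  obtain ⟨c, huc, hc⟩ := exists_between h
  refine tendsto_of_tendsto_of_tendsto_of_le_of_le' tendsto_const_nhds
    (ENNReal.tendsto_pow_atTop_nhds_zero_of_lt_one (EReal.exp_lt_one_iff.2 hc))
    (Eventually.of_forall fun _ => zero_le) ?_
  filter_upwards [eventually_le_exp huc] with n hn
  rwa [mul_comm, EReal.exp_nmul] at hn

variable {Ω : ℕ → Type*} [∀ n, MeasurableSpace (Ω n)] {P Q : ∀ n, Measure (Ω n)}

theorem eventually_ofReal_mul_measure_le [∀ n, IsFiniteMeasure (P n)]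
    [∀ n, IsFiniteMeasure (Q n)] {D : ℝ≥0∞} (hD : ∀ n, klDiv (P n) (Q n) ≤ n * D)
    {A : ∀ n, Set (Ω n)} {E : ℝ} (hE : 0 ≤ E)
    (hQ : expGrowthSup (fun n => Q n (A n)) < ((-E : ℝ) : EReal)) :
    ∀ᶠ n : ℕ in atTop, ENNReal.ofReal E * P n (A n) ≤ D + (n : ℝ≥0∞)⁻¹ := by
  filter_upwards [eventually_le_exp hQ, eventually_ne_atTop 0] with n hn hn₀
  rw [← EReal.coe_natCast, ← EReal.coe_mul, EReal.exp_coe] at hn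
  have hn₀' : (n : ℝ≥0∞) ≠ 0 := Nat.cast_ne_zero.2 hn₀
  have hQ_le : ENNReal.ofReal (Real.exp (n * E) - 1) * Q n (A n) ≤ 1 :=
    calc ENNReal.ofReal (Real.exp (n * E) - 1) * Q n (A n)
        ≤ ENNReal.ofReal (Real.exp (n * E)) * ENNReal.ofReal (Real.exp (-E * n)) := by
          gcongr
          linarith
      _ = 1 := by
          rw [← ENNReal.ofReal_mul (Real.exp_nonneg _), ← Real.exp_add, neg_mul, mul_comm E,
            add_neg_cancel, Real.exp_zero, ENNReal.ofReal_one]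
  have h : n * (ENNReal.ofReal E * P n (A n)) ≤ n * (D + (n : ℝ≥0∞)⁻¹) :=
    calc n * (ENNReal.ofReal E * P n (A n)) = ENNReal.ofReal (n * E) * P n (A n) := by
          rw [ENNReal.ofReal_mul n.cast_nonneg, ENNReal.ofReal_natCast, mul_assoc]
      _ ≤ klDiv (P n) (Q n) + ENNReal.ofReal (Real.exp (n * E) - 1) * Q n (A n) :=
          ofReal_mul_measure_le_klDiv_add _ _ (by positivity) _
      _ ≤ n * D + 1 := add_le_add (hD n) hQ_le
      _ = n * (D + (n : ℝ≥0∞)⁻¹) := by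
          rw [mul_add, ENNReal.mul_inv_cancel hn₀' (ENNReal.natCast_ne_top n)]
  exact (ENNReal.mul_le_mul_iff_right hn₀' (ENNReal.natCast_ne_top n)).1 h

variable [∀ n, IsProbabilityMeasure (P n)] [∀ n, IsFiniteMeasure (Q n)]

theorem rAchievable.le_of_klDiv_le {D : ℝ≥0∞} (hD : ∀ n, klDiv (P n) (Q n) ≤ n * D)
    {r E : ℝ} (hr : 0 < r) (h : rAchievable P Q r E) : (E : EReal) ≤ D := by
  obtain ⟨A, hA, hP, hQ⟩ := rAchievable_iff_expGrowthSup.1 h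
  refine EReal.ge_of_forall_gt_iff_ge.1 fun E' hE' => ?_
  rcases le_total E' 0 with hE'₀ | hE'₀
  · exact (EReal.coe_nonpos.2 hE'₀).trans (EReal.coe_ennreal_nonneg D)
  have hQ' : expGrowthSup (fun n => Q n (A n)) < ((-E' : ℝ) : EReal) :=
    hQ.trans_lt (EReal.coe_lt_coe_iff.2 (neg_lt_neg (EReal.coe_lt_coe_iff.1 hE')))
  have hP' : Tendsto (fun n => P n (A n)) atTop (𝓝 1) := by
    have hcompl := tendsto_zero_of_expGrowthSup_neg
      (hP.trans_lt (EReal.coe_neg'.2 (neg_neg_of_pos hr)))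
    simpa only [tsub_zero, ← prob_compl_eq_one_sub (hA _).compl, compl_compl] using
      ENNReal.Tendsto.sub (tendsto_const_nhds (x := (1 : ℝ≥0∞))) hcompl (Or.inl ENNReal.one_ne_top)
  have hlim : ENNReal.ofReal E' * 1 ≤ D + 0 :=
    le_of_tendsto_of_tendsto (ENNReal.Tendsto.const_mul hP' (Or.inl one_ne_zero))
      (tendsto_const_nhds.add ENNReal.tendsto_inv_nat_nhds_zero)
      (eventually_ofReal_mul_measure_le hD hE'₀ hQ')
  rw [mul_one, add_zero, ← EReal.coe_ennreal_le_coe_ennreal_iff, EReal.coe_ennreal_ofReal,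
    max_eq_left hE'₀] at hlim
  exact hlim

theorem Be_le_of_klDiv_le {D : ℝ≥0∞} (hD : ∀ n, klDiv (P n) (Q n) ≤ n * D) {r : ℝ} (hr : 0 < r) :
    Be P Q r ≤ D := by
  refine sSup_le ?_
  rintro _ ⟨E, hE, rfl⟩
  exact hE.le_of_klDiv_le hD hr

theorem Be_pi_le_klDiv {X : Type*} [MeasurableSpace X] (μ ν : Measure X) [IsProbabilityMeasure μ]
    [IsProbabilityMeasure ν] {r : ℝ} (hr : 0 < r) :
    Be (fun n => Measure.pi fun _ : Fin n => μ) (fun n => Measure.pi fun _ : Fin n => ν) r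
      ≤ klDiv μ ν :=
  Be_le_of_klDiv_le (fun n => (klDiv_pi_const μ ν n).le) hr

end WeakConverse

section Tsallis

/-- The integrand of the Tsallis relative entropy of order `1 - s`, in the normalization of
`klFun`: the affine terms make it nonnegative for `0 < s < 1` and `0 ≤ y`, with value `0` at `1`,
so that Fatou's lemma applies to the limit `s ↓ 0`. -/
noncomputable def tsallisFun (s y : ℝ) : ℝ := (y - y ^ (1 - s)) / s + 1 - y

theorem mul_tsallisFun_add_rpow {s : ℝ} (hs : s ≠ 0) (y : ℝ) :
    s * tsallisFun s y + y ^ (1 - s) = s + (1 - s) * y := by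
  unfold tsallisFun
  field_simp
  ring

theorem tsallisFun_nonneg {s : ℝ} (hs : s ∈ Set.Ioo 0 1) {y : ℝ} (hy : 0 ≤ y) :
    0 ≤ tsallisFun s y := by
  have h := Real.geom_mean_le_arith_mean2_weighted hs.1.le (sub_nonneg.2 hs.2.le) zero_le_one hy
    (by ring)
  rw [Real.one_rpow, one_mul, mul_one, ← mul_tsallisFun_add_rpow hs.1.ne'] at h
  exact nonneg_of_mul_nonneg_right (by linarith) hs.1

theorem tendsto_tsallisFun {y : ℝ} (hy : 0 ≤ y) :
    Tendsto (fun s => tsallisFun s y) (𝓝[>] 0) (𝓝 (klFun y)) := by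
  rcases hy.eq_or_lt with rfl | hy
  · refine (tendsto_congr' ?_).2 tendsto_const_nhds
    filter_upwards [Ioo_mem_nhdsGT one_pos] with s hs
    rw [tsallisFun, Real.zero_rpow (sub_pos.2 hs.2).ne', klFun_zero]
    simp
  · have hlog := tendsto_rpow_sub_one_log (inv_pos.2 hy)
    rw [Real.log_inv] at hlog
    convert ((hlog.const_mul (-y)).add_const 1).sub_const y using 2 with s
    · rw [tsallisFun, Real.rpow_sub hy, Real.rpow_one, Real.inv_rpow hy.le]
      ring
    · rw [klFun_apply]
      ring

theorem measurable_tsallisFun (s : ℝ) : Measurable (tsallisFun s) := by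
  unfold tsallisFun
  fun_prop

variable {X : Type*} [MeasurableSpace X] {μ ν : Measure X}

theorem ofReal_mul_lintegral_tsallisFun_add [IsProbabilityMeasure μ] [IsProbabilityMeasure ν]
    (hμν : μ ≪ ν) {s : ℝ} (hs : s ∈ Set.Ioo 0 1) :
    ENNReal.ofReal s * ∫⁻ x, ENNReal.ofReal (tsallisFun s (μ.rnDeriv ν x).toReal) ∂ν
      + ∫⁻ x, μ.rnDeriv ν x ^ (1 - s) ∂ν = 1 := by
  have hs' : 0 < 1 - s := sub_pos.2 hs.2
  have hpointwise : ∀ᵐ x ∂ν,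
      ENNReal.ofReal s * ENNReal.ofReal (tsallisFun s (μ.rnDeriv ν x).toReal)
        + μ.rnDeriv ν x ^ (1 - s)
      = ENNReal.ofReal s + ENNReal.ofReal (1 - s) * μ.rnDeriv ν x := by
    filter_upwards [μ.rnDeriv_ne_top ν] with x hx
    lift μ.rnDeriv ν x to ℝ≥0 using hx with y
    rw [← ENNReal.ofReal_coe_nnreal, ENNReal.toReal_ofReal y.coe_nonneg,
      ENNReal.ofReal_rpow_of_nonneg y.coe_nonneg hs'.le, ← ENNReal.ofReal_mul hs.1.le,
      ← ENNReal.ofReal_mul hs'.le, ← ENNReal.ofReal_add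
        (mul_nonneg hs.1.le (tsallisFun_nonneg hs y.coe_nonneg)) (by positivity),
      ← ENNReal.ofReal_add hs.1.le (by positivity), mul_tsallisFun_add_rpow hs.1.ne']
  have hmeas : Measurable fun x => ENNReal.ofReal (tsallisFun s (μ.rnDeriv ν x).toReal) :=
    ((measurable_tsallisFun s).comp (μ.measurable_rnDeriv ν).ennreal_toReal).ennreal_ofReal
  rw [← lintegral_const_mul _ hmeas, ← lintegral_add_left (hmeas.const_mul _),
    lintegral_congr_ae hpointwise, lintegral_add_left measurable_const,
    lintegral_const_mul _ (μ.measurable_rnDeriv ν), Measure.lintegral_rnDeriv hμν,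
    lintegral_const, measure_univ, measure_univ, mul_one, mul_one,
    ← ENNReal.ofReal_add hs.1.le hs'.le, add_sub_cancel, ENNReal.ofReal_one]

theorem klDiv_le_liminf_lintegral_tsallisFun [IsFiniteMeasure μ] [IsFiniteMeasure ν]
    (hμν : μ ≪ ν) :
    klDiv μ ν ≤ liminf
      (fun s => ∫⁻ x, ENNReal.ofReal (tsallisFun s (μ.rnDeriv ν x).toReal) ∂ν) (𝓝[>] 0) := by
  rw [klDiv_eq_lintegral_klFun_of_ac hμν]
  have hlim (x : X) := ((ENNReal.continuous_ofReal.tendsto _).comp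
    (tendsto_tsallisFun (y := (μ.rnDeriv ν x).toReal) ENNReal.toReal_nonneg)).liminf_eq
  simp_rw [← hlim]
  exact lintegral_liminf_le fun s =>
    ((measurable_tsallisFun s).comp (μ.measurable_rnDeriv ν).ennreal_toReal).ennreal_ofReal

theorem exists_lintegral_rnDeriv_rpow_le [IsProbabilityMeasure μ] [IsProbabilityMeasure ν]
    (hμν : μ ≪ ν) {a : ℝ} (ha : (a : EReal) < klDiv μ ν) :
    ∃ s ∈ Set.Ioo (0 : ℝ) 1,
      ∫⁻ x, μ.rnDeriv ν x ^ (1 - s) ∂ν ≤ ENNReal.ofReal (Real.exp (-(s * a))) := by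
  have hK : ∀ᶠ s in 𝓝[>] (0 : ℝ), ENNReal.ofReal a
      ≤ ∫⁻ x, ENNReal.ofReal (tsallisFun s (μ.rnDeriv ν x).toReal) ∂ν := by
    rcases le_total a 0 with ha₀ | ha₀
    · simp [ENNReal.ofReal_of_nonpos ha₀]
    · have ha' : ENNReal.ofReal a < klDiv μ ν := by
        rwa [← EReal.coe_ennreal_lt_coe_ennreal_iff, EReal.coe_ennreal_ofReal, max_eq_left ha₀]
      filter_upwards [eventually_lt_of_lt_liminf
        (ha'.trans_le (klDiv_le_liminf_lintegral_tsallisFun hμν))] with s hs using hs.le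
  obtain ⟨s, hsK, hs⟩ := (hK.and (Ioo_mem_nhdsGT one_pos)).exists
  have hexp : 1 ≤ ENNReal.ofReal (s * a) + ENNReal.ofReal (Real.exp (-(s * a))) := by
    refine le_trans ?_ ENNReal.ofReal_add_le
    rw [ENNReal.one_le_ofReal]
    linarith [Real.add_one_le_exp (-(s * a))]
  refine ⟨s, hs, ?_⟩
  refine (ENNReal.add_le_add_iff_left (ENNReal.ofReal_ne_top (r := s * a))).1 (le_trans ?_ hexp)
  rw [← ofReal_mul_lintegral_tsallisFun_add hμν hs, ENNReal.ofReal_mul hs.1.le]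
  gcongr

end Tsallis

section Achievability

variable {X : Type*} [MeasurableSpace X]

theorem lintegral_pi_prod {ι : Type*} [Fintype ι] {Z : ι → Type*} [∀ i, MeasurableSpace (Z i)]
    (μ : ∀ i, Measure (Z i)) [∀ i, IsProbabilityMeasure (μ i)] {f : ∀ i, Z i → ℝ≥0∞}
    (hf : ∀ i, Measurable (f i)) :
    ∫⁻ x, ∏ i, f i (x i) ∂Measure.pi μ = ∏ i, ∫⁻ x, f i x ∂μ i := by
  rw [ProbabilityTheory.lintegral_prod_eq_prod_lintegral_of_indepFun Finset.univ _
    (ProbabilityTheory.iIndepFun_pi fun i => (hf i).aemeasurable)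
    fun i => (hf i).comp (measurable_pi_apply i)]
  exact Finset.prod_congr rfl fun i _ => (measurePreserving_eval μ i).lintegral_comp (hf i)

theorem expGrowthSup_pi_exp_le_prod_le (μ : Measure X) [IsProbabilityMeasure μ] {f : X → ℝ≥0∞}
    (hf : Measurable f) {b : ℝ} (hb : ∫⁻ x, f x ∂μ ≤ ENNReal.ofReal (Real.exp b)) (a : ℝ) :
    expGrowthSup (fun n => Measure.pi (fun _ : Fin n => μ)
      {x | ENNReal.ofReal (Real.exp (n * a)) ≤ ∏ i, f (x i)}) ≤ ((b - a : ℝ) : EReal) := by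
  refine Eventually.expGrowthSup_le (Eventually.of_forall fun n => ?_)
  have hmeas : Measurable fun x : Fin n → X => ∏ i, f (x i) := by fun_prop
  calc Measure.pi (fun _ : Fin n => μ) {x | ENNReal.ofReal (Real.exp (n * a)) ≤ ∏ i, f (x i)}
      ≤ (∫⁻ x, f x ∂μ) ^ n / ENNReal.ofReal (Real.exp (n * a)) := by
        refine (meas_ge_le_lintegral_div hmeas.aemeasurable (by simp [Real.exp_pos])
          ENNReal.ofReal_ne_top).trans_eq ?_
        rw [lintegral_pi_prod _ fun _ => hf, Finset.prod_const, Finset.card_univ, Fintype.card_fin]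
    _ ≤ ENNReal.ofReal (Real.exp b) ^ n / ENNReal.ofReal (Real.exp (n * a)) := by gcongr
    _ = EReal.exp (((b - a : ℝ) : EReal) * n) := by
        rw [← EReal.coe_natCast, ← EReal.coe_mul, EReal.exp_coe,
          ← ENNReal.ofReal_pow (Real.exp_nonneg b), ← Real.exp_nat_mul,
          ← ENNReal.ofReal_div_of_pos (Real.exp_pos _), ← Real.exp_sub]
        ring_nf

theorem ofReal_exp_le_prod_rpow_neg {ι : Type*} {t : Finset ι} {f : ι → ℝ≥0} {c s : ℝ}
    (hs : 0 ≤ s) (h : ∏ i ∈ t, (f i : ℝ≥0∞) ≤ ENNReal.ofReal (Real.exp c)) :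
    ENNReal.ofReal (Real.exp (c * -s)) ≤ ∏ i ∈ t, (f i : ℝ≥0∞) ^ (-s) := by
  rw [ENNReal.prod_rpow_of_ne_top fun _ _ => ENNReal.coe_ne_top, Real.exp_mul,
    ← ENNReal.ofReal_rpow_of_pos (Real.exp_pos c)]
  rw [ENNReal.rpow_neg, ENNReal.rpow_neg]
  exact ENNReal.inv_le_inv.2 (ENNReal.rpow_le_rpow h hs)

theorem rAchievable_pi (μ ν : Measure X) [IsProbabilityMeasure μ] [IsProbabilityMeasure ν]
    {f : X → ℝ≥0} (hf : Measurable f) (hν : ∫⁻ x, f x ∂ν ≤ 1) {s : ℝ} (hs : 0 ≤ s) {a r : ℝ}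
    (hμ : ∫⁻ x, (f x : ℝ≥0∞) ^ (-s) ∂μ ≤ ENNReal.ofReal (Real.exp (-(s * a + r)))) :
    rAchievable (fun n => Measure.pi fun _ : Fin n => μ) (fun n => Measure.pi fun _ : Fin n => ν)
      r a := by
  have hf' : Measurable fun x => (f x : ℝ≥0∞) := hf.coe_nnreal_ennreal
  rw [rAchievable_iff_expGrowthSup]
  refine ⟨fun n => {x | ENNReal.ofReal (Real.exp (n * a)) ≤ ∏ i, (f (x i) : ℝ≥0∞)},
    fun n => measurableSet_le measurable_const (by fun_prop), ?_, ?_⟩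
  · have hsubset (n : ℕ) :
        {x : Fin n → X | ENNReal.ofReal (Real.exp (n * a)) ≤ ∏ i, (f (x i) : ℝ≥0∞)}ᶜ ⊆
          {x | ENNReal.ofReal (Real.exp (n * (a * -s))) ≤ ∏ i, (f (x i) : ℝ≥0∞) ^ (-s)} := by
      intro x hx
      simp only [Set.mem_compl_iff, Set.mem_ofPred_eq, not_le] at hx
      have h := ofReal_exp_le_prod_rpow_neg hs hx.le
      rwa [mul_assoc] at h
    refine (expGrowthSup_monotone fun n => measure_mono (hsubset n)).trans
      ((expGrowthSup_pi_exp_le_prod_le μ (hf'.pow_const _) hμ _).trans_eq ?_)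
    ring_nf
  · refine (expGrowthSup_pi_exp_le_prod_le ν hf' (b := 0) ?_ a).trans_eq ?_
    · rwa [Real.exp_zero, ENNReal.ofReal_one]
    · rw [zero_sub]

theorem mul_rpow_neg_eq_rpow_one_sub {y : ℝ≥0∞} (hy : y ≠ ∞) {s : ℝ} (hs : s < 1) :
    y * y ^ (-s) = y ^ (1 - s) := by
  rcases eq_or_ne y 0 with rfl | hy₀
  · rw [zero_mul, ENNReal.zero_rpow_of_pos (sub_pos.2 hs)]
  · rw [sub_eq_add_neg, ENNReal.rpow_add _ _ hy₀ hy, ENNReal.rpow_one]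

theorem exists_rAchievable_pi_of_ac {μ ν : Measure X} [IsProbabilityMeasure μ]
    [IsProbabilityMeasure ν] (hμν : μ ≪ ν) {a : ℝ} (ha : (a : EReal) < klDiv μ ν) :
    ∃ r : ℝ, 0 < r ∧ rAchievable (fun n => Measure.pi fun _ : Fin n => μ)
      (fun n => Measure.pi fun _ : Fin n => ν) r a := by
  obtain ⟨b, hab, hb⟩ := EReal.lt_iff_exists_real_btwn.1 ha
  obtain ⟨s, hs, hle⟩ := exists_lintegral_rnDeriv_rpow_le hμν hb
  have hf : ∀ᵐ x ∂ν, ((μ.rnDeriv ν x).toNNReal : ℝ≥0∞) = μ.rnDeriv ν x := by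
    filter_upwards [μ.rnDeriv_ne_top ν] with x hx using ENNReal.coe_toNNReal hx
  refine ⟨s * (b - a), mul_pos hs.1 (sub_pos.2 (EReal.coe_lt_coe_iff.1 hab)),
    rAchievable_pi μ ν (μ.measurable_rnDeriv ν).ennreal_toNNReal ?_ hs.1.le ?_⟩
  · rw [lintegral_congr_ae hf, Measure.lintegral_rnDeriv hμν, measure_univ]
  · calc ∫⁻ x, ((μ.rnDeriv ν x).toNNReal : ℝ≥0∞) ^ (-s) ∂μ
        = ∫⁻ x, μ.rnDeriv ν x ^ (-s) ∂μ :=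
          lintegral_congr_ae ((hμν.ae_eq hf).fun_comp (· ^ (-s)))
      _ = ∫⁻ x, μ.rnDeriv ν x * μ.rnDeriv ν x ^ (-s) ∂ν :=
          (lintegral_rnDeriv_mul hμν (by fun_prop)).symm
      _ = ∫⁻ x, μ.rnDeriv ν x ^ (1 - s) ∂ν := lintegral_congr_ae <|
          (μ.rnDeriv_ne_top ν).mono fun x hx => mul_rpow_neg_eq_rpow_one_sub hx hs.2
      _ ≤ ENNReal.ofReal (Real.exp (-(s * b))) := hle
      _ = ENNReal.ofReal (Real.exp (-(s * a + s * (b - a)))) := by ring_nf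

theorem exists_rAchievable_pi_of_not_ac {μ ν : Measure X} [IsProbabilityMeasure μ]
    [IsProbabilityMeasure ν] (hμν : ¬ μ ≪ ν) (a : ℝ) :
    ∃ r : ℝ, 0 < r ∧ rAchievable (fun n => Measure.pi fun _ : Fin n => μ)
      (fun n => Measure.pi fun _ : Fin n => ν) r a := by
  obtain ⟨S, hS, hνS, hμS⟩ : ∃ S, MeasurableSet S ∧ ν S = 0 ∧ μ S ≠ 0 := by
    by_contra! h
    exact hμν (Measure.AbsolutelyContinuous.mk h)
  have hlog : ENNReal.log (μ Sᶜ) < 0 := by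
    rw [ENNReal.log_lt_zero_iff]
    exact prob_le_one.lt_of_ne (mt (prob_compl_eq_one_iff hS).1 hμS)
  obtain ⟨c, hc, hc₀⟩ := EReal.lt_iff_exists_real_btwn.1 hlog
  refine ⟨-c, neg_pos.2 (EReal.coe_neg'.1 hc₀), rAchievable_iff_expGrowthSup.2
    ⟨fun n => (Set.univ.pi fun _ => Sᶜ)ᶜ, fun n => (MeasurableSet.univ_pi fun _ => hS.compl).compl,
      ?_, ?_⟩⟩
  · simp only [compl_compl, Measure.pi_pi, Finset.prod_const, Finset.card_univ, Fintype.card_fin,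
      neg_neg]
    exact expGrowthSup_pow.trans_le hc.le
  · have hν (n : ℕ) : Measure.pi (fun _ : Fin n => ν) (Set.univ.pi fun _ => Sᶜ)ᶜ = 0 := by
      rw [prob_compl_eq_zero_iff (MeasurableSet.univ_pi fun _ => hS.compl), Measure.pi_pi,
        (prob_compl_eq_one_iff hS).2 hνS, Finset.prod_const_one]
    simp only [hν]
    exact expGrowthSup_zero.trans_le bot_le

theorem exists_rAchievable_pi {μ ν : Measure X} [IsProbabilityMeasure μ]
    [IsProbabilityMeasure ν] {a : ℝ} (ha : (a : EReal) < klDiv μ ν) :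
    ∃ r : ℝ, 0 < r ∧ rAchievable (fun n => Measure.pi fun _ : Fin n => μ)
      (fun n => Measure.pi fun _ : Fin n => ν) r a := by
  by_cases hμν : μ ≪ ν
  exacts [exists_rAchievable_pi_of_ac hμν ha, exists_rAchievable_pi_of_not_ac hμν a]

theorem tendsto_Be_pi (μ ν : Measure X) [IsProbabilityMeasure μ] [IsProbabilityMeasure ν] :
    Tendsto (fun r => Be (fun n => Measure.pi fun _ : Fin n => μ)
      (fun n => Measure.pi fun _ : Fin n => ν) r) (𝓝[>] 0) (𝓝 (klDiv μ ν)) := by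
  refine tendsto_order.2 ⟨fun c hc => ?_, fun c hc => ?_⟩
  · obtain ⟨a, hca, ha⟩ := EReal.lt_iff_exists_real_btwn.1 hc
    obtain ⟨r₀, hr₀, h⟩ := exists_rAchievable_pi ha
    filter_upwards [Ioo_mem_nhdsGT hr₀] with r hr
    exact lt_Be_iff.2 ⟨a, hca, h.mono hr.2.le le_rfl⟩
  · filter_upwards [self_mem_nhdsWithin] with r hr
    exact (Be_pi_le_klDiv μ ν hr).trans_lt hc

end Achievability

section FiniteAlphabet

variable {X : Type*} [Fintype X] [MeasurableSpace X]

theorem isProbabilityMeasure_wMeasure {p : X → ℝ} (hp₀ : ∀ x, 0 ≤ p x) (hp : ∑ x, p x = 1) :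
    IsProbabilityMeasure (wMeasure p) := by
  constructor
  simp only [wMeasure, Measure.coe_finsetSum, Finset.sum_apply, Measure.smul_apply, measure_univ,
    smul_eq_mul, mul_one]
  rw [← ENNReal.ofReal_sum_of_nonneg fun x _ => hp₀ x, hp, ENNReal.ofReal_one]

variable [MeasurableSingletonClass X]

theorem wMeasure_singleton (p : X → ℝ) (x : X) : wMeasure p {x} = ENNReal.ofReal (p x) := by
  classical
  simp [wMeasure, Measure.coe_finsetSum, Set.indicator_apply]

theorem withDensity_div_wMeasure (q : X → ℝ) {p : X → ℝ} (hp₀ : ∀ x, 0 < p x) :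
    (wMeasure p).withDensity (fun x => ENNReal.ofReal (q x / p x)) = wMeasure q := by
  refine Measure.ext_of_singleton fun x => ?_
  rw [withDensity_apply _ (measurableSet_singleton x), lintegral_singleton, wMeasure_singleton,
    wMeasure_singleton, ← ENNReal.ofReal_mul' (hp₀ x).le, div_mul_cancel₀ _ (hp₀ x).ne']

theorem klDiv_wMeasure {q p : X → ℝ} (hq₀ : ∀ x, 0 ≤ q x) (hq : ∑ x, q x = 1)
    (hp₀ : ∀ x, 0 < p x) (hp : ∑ x, p x = 1) :
    (klDiv (wMeasure q) (wMeasure p) : EReal) = KLfin q p := by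
  have := isProbabilityMeasure_wMeasure hq₀ hq
  have := isProbabilityMeasure_wMeasure (fun x => (hp₀ x).le) hp
  have hqp := withDensity_div_wMeasure q hp₀
  have hac : wMeasure q ≪ wMeasure p := hqp ▸ withDensity_absolutelyContinuous _ _
  have hllr : llr (wMeasure q) (wMeasure p) =ᵐ[wMeasure q] fun x => Real.log (q x / p x) := by
    have h := Measure.rnDeriv_withDensity (wMeasure p)
      (f := fun x => ENNReal.ofReal (q x / p x)) (measurable_of_finite _)
    rw [hqp] at h
    filter_upwards [hac.ae_le h] with x hx
    rw [llr, hx, ENNReal.toReal_ofReal (div_nonneg (hq₀ x) (hp₀ x).le)]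
  have hne_top : klDiv (wMeasure q) (wMeasure p) ≠ ∞ := klDiv_ne_top hac Integrable.of_finite
  have htoReal : (klDiv (wMeasure q) (wMeasure p)).toReal = KLfin q p := by
    rw [toReal_klDiv_of_measure_eq hac (by rw [measure_univ, measure_univ]),
      integral_congr_ae hllr, integral_fintype Integrable.of_finite, KLfin]
    simp only [measureReal_def, wMeasure_singleton, ENNReal.toReal_ofReal (hq₀ _), smul_eq_mul]
  rw [← htoReal, EReal.coe_ennreal_toReal hne_top]

end FiniteAlphabet

theorem mixed_vs_memoryless_error_exponent_general {X : Type*} [MeasurableSpace X]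
    (μ₁ μ₂ ν : Measure X) [IsProbabilityMeasure μ₁] [IsProbabilityMeasure μ₂]
    [IsProbabilityMeasure ν] {a₁ a₂ : ℝ≥0∞} (ha₁₀ : a₁ ≠ 0) (ha₁ : a₁ ≠ ∞) (ha₂₀ : a₂ ≠ 0)
    (ha₂ : a₂ ≠ ∞) :
    (∀ r : ℝ, 0 < r →
      Be (fun n => a₁ • Measure.pi (fun _ : Fin n => μ₁) + a₂ • Measure.pi (fun _ : Fin n => μ₂))
        (fun n => Measure.pi fun _ : Fin n => ν) r
        ≤ min (klDiv μ₁ ν : EReal) (klDiv μ₂ ν)) ∧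
    Tendsto
      (fun r : ℝ =>
        Be (fun n => a₁ • Measure.pi (fun _ : Fin n => μ₁) + a₂ • Measure.pi (fun _ : Fin n => μ₂))
          (fun n => Measure.pi fun _ : Fin n => ν) r)
      (𝓝[>] 0) (𝓝 (min (klDiv μ₁ ν : EReal) (klDiv μ₂ ν))) := by
  simp only [Be_add, Be_smul ha₁₀ ha₁, Be_smul ha₂₀ ha₂]
  exact ⟨fun r hr => min_le_min (Be_pi_le_klDiv μ₁ ν hr) (Be_pi_le_klDiv μ₂ ν hr),
    (tendsto_Be_pi μ₁ ν).min (tendsto_Be_pi μ₂ ν)⟩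

/-- Example 3.3 (eqs. (3.26)–(3.27)): for the mixed i.i.d. null hypothesis
`P_n = α₁ P₁^{⊗n} + α₂ P₂^{⊗n}` against the i.i.d. alternative `P̄^{⊗n}`:
(a) `B_e(r) ≤ min(D(P₁‖P̄), D(P₂‖P̄))` for every `r > 0`, and
(b) `B_e(r) → min(D(P₁‖P̄), D(P₂‖P̄))` as `r ↓ 0`. -/
theorem mixed_vs_memoryless_error_exponent {X : Type*} [Fintype X] [MeasurableSpace X]
    [MeasurableSingletonClass X]
    (P₁ P₂ Pb : X → ℝ) (hP₁0 : ∀ x, 0 ≤ P₁ x) (hP₂0 : ∀ x, 0 ≤ P₂ x)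
    (hP₁1 : ∑ x : X, P₁ x = 1) (hP₂1 : ∑ x : X, P₂ x = 1)
    (hPb : ∀ x, 0 < Pb x) (hPb1 : ∑ x : X, Pb x = 1)
    (α₁ α₂ : ℝ) (hα₁ : 0 < α₁) (hα₂ : 0 < α₂) (hα : α₁ + α₂ = 1) :
    (∀ r : ℝ, 0 < r →
      Be (fun n => ENNReal.ofReal α₁ • Measure.pi (fun _ : Fin n => wMeasure P₁)
            + ENNReal.ofReal α₂ • Measure.pi (fun _ : Fin n => wMeasure P₂))
         (fun n => Measure.pi fun _ : Fin n => wMeasure Pb) r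
        ≤ ((min (KLfin P₁ Pb) (KLfin P₂ Pb) : ℝ) : EReal)) ∧
    Filter.Tendsto
      (fun r : ℝ =>
        Be (fun n => ENNReal.ofReal α₁ • Measure.pi (fun _ : Fin n => wMeasure P₁)
              + ENNReal.ofReal α₂ • Measure.pi (fun _ : Fin n => wMeasure P₂))
           (fun n => Measure.pi fun _ : Fin n => wMeasure Pb) r)
      (nhdsWithin 0 (Set.Ioi 0))
      (nhds ((min (KLfin P₁ Pb) (KLfin P₂ Pb) : ℝ) : EReal)) := by
  have := isProbabilityMeasure_wMeasure hP₁0 hP₁1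
  have := isProbabilityMeasure_wMeasure hP₂0 hP₂1
  have := isProbabilityMeasure_wMeasure (fun x => (hPb x).le) hPb1
  rw [EReal.coe_strictMono.monotone.map_min, ← klDiv_wMeasure hP₁0 hP₁1 hPb hPb1,
    ← klDiv_wMeasure hP₂0 hP₂1 hPb hPb1]
  exact mixed_vs_memoryless_error_exponent_general _ _ _ (ENNReal.ofReal_pos.2 hα₁).ne'
    ENNReal.ofReal_ne_top (ENNReal.ofReal_pos.2 hα₂).ne' ENNReal.ofReal_ne_top
end

section
/- (Example 3.6, a source with discontinuous divergence spectrum, eq. (3.47)) Let X = {0,1} and fix 0 < α < 1. For every n such that ⌊2^{αn}⌋ + 2 ≤ 2ⁿ, choose a set S_n ⊆ Xⁿ with |S_n| = ⌊2^{αn}⌋ and two distinct points x₀, x₁ ∈ Xⁿ \ S_n, and define the null hypothesis P_n on Xⁿ by P_n({x}) = 2^{−2αn} for x ∈ S_n, P_n({x₁}) = 2^{−3αn}, P_n({x₀}) = 1 − ⌊2^{αn}⌋·2^{−2αn} − 2^{−3αn}, and P_n({x}) = 0 otherwise (for the finitely many remaining n let P_n be an arbitrary probability distribution on Xⁿ).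 Let the alternative hypothesis Q_n be the uniform distribution on Xⁿ, Q_n({x}) = 2^{−n}. Then, with all exponents measured to base 2 (i.e., using log₂ in the definitions of achievability), for every r > 0: B_e(r) = 1 − α if r > α, and B_e(r) = 1 if 0 < r ≤ α. -/
open MeasureTheory Filter
open scoped ENNReal NNReal

/-- The base-2 exponent `-(1/n) log₂ p` of a nonneg extended real `p`, valued in `EReal`,
with the conventions `-log₂ 0 = +∞` and `-log₂ ∞ = -∞`. -/
noncomputable def expRate2 (n : ℕ) (p : ℝ≥0∞) : EReal :=
  ((((n : ℝ) * Real.log 2)⁻¹ : ℝ) : EReal) * (-(ENNReal.log p))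

section Setup

variable {Ω : ℕ → Type*} [∀ n, MeasurableSpace (Ω n)]

/-- `E` is `r`-achievable (base-2 exponents): there are acceptance regions `A n` with
`liminf -(1/n) log₂ μ_n ≥ r` and `liminf -(1/n) log₂ λ_n ≥ E`. -/
def rAchievable2 (P Q : ∀ n, Measure (Ω n)) (r E : ℝ) : Prop :=
  ∃ A : ∀ n, Set (Ω n), (∀ n, MeasurableSet (A n)) ∧
    (r : EReal) ≤ Filter.atTop.liminf (fun n => expRate2 n ((P n) (A n)ᶜ)) ∧
    (E : EReal) ≤ Filter.atTop.liminf (fun n => expRate2 n ((Q n) (A n)))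

/-- The optimal error exponent `B_e(r)` (base-2 exponents). -/
noncomputable def Be2 (P Q : ∀ n, Measure (Ω n)) (r : ℝ) : EReal :=
  sSup {x : EReal | ∃ E : ℝ, rAchievable2 P Q r E ∧ x = (E : EReal)}

end Setup

/-!
On a set where `P ≤ K • Q`, every acceptance region `A` satisfies `P S ≤ P Aᶜ + K * Q A`. If the
first kind of error decays faster than `P S`, then `Q A` is therefore at least of order `P S / K`.
When `r > α`, the first kind of error is too small to reject a substantial part of `S_n`, whose
probability has exponent `α`, so about `2^{αn}` points must be accepted, at a `Q_n`-cost of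
`2^{-(1-α)n}`. When `r ≤ α`, all of `S_n` can be rejected, and accepting the single point `x₀`
costs only `2^{-n}`.
-/

section ExponentialRate

variable {C c : ℝ} {p : ℕ → ℝ≥0∞}

theorem expRate2_antitone (n : ℕ) : Antitone (expRate2 n) := fun p q hpq => by
  have hscale : (0 : ℝ) ≤ ((n : ℝ) * Real.log 2)⁻¹ := by positivity
  exact mul_le_mul_of_nonneg_left (EReal.neg_le_neg_iff.2 (ENNReal.log_monotone hpq))
    (EReal.coe_nonneg.2 hscale)

theorem expRate2_ofReal_mul_two_rpow (hC : 0 < C) (c : ℝ) {n : ℕ} (hn : n ≠ 0) :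
    expRate2 n (ENNReal.ofReal (C * (2 : ℝ) ^ (-(c * n)))) =
      ((c - Real.log C / Real.log 2 / n : ℝ) : EReal) := by
  have hpow : (0 : ℝ) < (2 : ℝ) ^ (-(c * n)) := by positivity
  have hlog : Real.log 2 ≠ 0 := (Real.log_pos one_lt_two).ne'
  rw [expRate2, ENNReal.log_ofReal_of_pos (by positivity), Real.log_mul hC.ne' hpow.ne',
    Real.log_rpow two_pos, ← EReal.coe_neg, ← EReal.coe_mul]
  congr 1
  field_simp
  ring

theorem tendsto_expRate2_ofReal_mul_two_rpow (hC : 0 < C) (c : ℝ) :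
    Tendsto (fun n : ℕ => expRate2 n (ENNReal.ofReal (C * (2 : ℝ) ^ (-(c * n))))) atTop
      (nhds (c : EReal)) := by
  have hreal : Tendsto (fun n : ℕ => c - Real.log C / Real.log 2 / n) atTop (nhds c) := by
    simpa only [sub_zero] using
      (tendsto_const_nhds (x := c)).sub (tendsto_const_div_atTop_nhds_zero_nat _)
  refine ((continuous_coe_real_ereal.tendsto c).comp hreal).congr' ?_
  filter_upwards [eventually_ne_atTop 0] with n hn
  exact (expRate2_ofReal_mul_two_rpow hC c hn).symm

theorem le_liminf_expRate2 (hC : 0 < C)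
    (h : ∀ᶠ n : ℕ in atTop, p n ≤ ENNReal.ofReal (C * (2 : ℝ) ^ (-(c * n)))) :
    (c : EReal) ≤ atTop.liminf fun n => expRate2 n (p n) := by
  rw [← (tendsto_expRate2_ofReal_mul_two_rpow hC c).liminf_eq]
  exact liminf_le_liminf (h.mono fun n hn => expRate2_antitone n hn)

theorem eventually_lt_of_lt_liminf_expRate2 (hC : 0 < C)
    (h : (c : EReal) < atTop.liminf fun n => expRate2 n (p n)) :
    ∀ᶠ n : ℕ in atTop, p n < ENNReal.ofReal (C * (2 : ℝ) ^ (-(c * n))) := by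
  obtain ⟨b, hcb, hb⟩ := exists_between h
  filter_upwards [eventually_lt_of_lt_liminf hb,
    (tendsto_expRate2_ofReal_mul_two_rpow hC c).eventually_lt_const hcb] with n hbp hbC
  exact (expRate2_antitone n).reflect_lt (hbC.trans hbp)

theorem liminf_expRate2_le (hC : 0 < C)
    (h : ∀ᶠ n : ℕ in atTop, ENNReal.ofReal (C * (2 : ℝ) ^ (-(c * n))) ≤ p n) :
    (atTop.liminf fun n => expRate2 n (p n)) ≤ (c : EReal) := by
  by_contra! hlt
  obtain ⟨n, hle, hlt⟩ := (h.and (eventually_lt_of_lt_liminf_expRate2 hC hlt)).exists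
  exact hle.not_gt hlt

end ExponentialRate

section MeasureBounds

variable {X : Type*} [MeasurableSpace X] {μ ν : Measure X} {s : Set X}

theorem measure_le_measure_compl_add_mul {K : ℝ≥0∞} (h : μ.restrict s ≤ K • ν) (A : Set X) :
    μ s ≤ μ Aᶜ + K * ν A :=
  calc μ s ≤ μ (s \ A) + μ (s ∩ A) := by
        rw [add_comm]
        exact measure_le_inter_add_sdiff μ s A
    _ ≤ μ Aᶜ + μ.restrict s A := by
        rw [Set.inter_comm]
        exact add_le_add (measure_mono fun x hx => hx.2) (Measure.le_restrict_apply s A)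
    _ ≤ μ Aᶜ + K * ν A := by gcongr; exact h A

theorem measure_eq_zero_of_measure_singleton_eq_zero (hs : s.Countable)
    (h : ∀ x ∈ s, μ {x} = 0) : μ s = 0 := by
  rw [← Set.biUnion_of_singleton s]
  exact (measure_biUnion_null_iff hs).2 h

theorem prob_compl_le_of_measure_eq_one_sub [IsProbabilityMeasure μ] (hs : MeasurableSet s)
    {t : ℝ} (h : μ s = ENNReal.ofReal (1 - t)) : μ sᶜ ≤ ENNReal.ofReal t := by
  rw [prob_compl_eq_one_sub hs, h, tsub_le_iff_right, ← ENNReal.ofReal_one]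
  simpa only [add_sub_cancel] using ENNReal.ofReal_add_le (p := t) (q := 1 - t)

variable [MeasurableSingletonClass X]

theorem tsum_measure_singleton_of_countable (μ : Measure X) (hs : s.Countable) :
    ∑' x : s, μ {(x : X)} = μ s := by
  rw [← measure_biUnion (f := fun x => {x}) hs (Set.pairwiseDisjoint_fiber id s)
    fun x _ => measurableSet_singleton x, Set.biUnion_of_singleton]

theorem restrict_le_of_measure_singleton_le (hs : s.Countable) (h : ∀ x ∈ s, μ {x} ≤ ν {x}) :
    μ.restrict s ≤ ν := by
  refine Measure.le_iff.2 fun A hA => ?_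
  have hAs : (A ∩ s).Countable := hs.mono Set.inter_subset_right
  calc μ.restrict s A = ∑' x : ↥(A ∩ s), μ {(x : X)} := by
        rw [Measure.restrict_apply hA, tsum_measure_singleton_of_countable μ hAs]
    _ ≤ ∑' x : ↥(A ∩ s), ν {(x : X)} := ENNReal.tsum_le_tsum fun x => h x x.2.2
    _ = ν (A ∩ s) := tsum_measure_singleton_of_countable ν hAs
    _ ≤ ν A := measure_mono Set.inter_subset_left

end MeasureBounds

theorem two_rpow_mul_two_rpow_neg (a b : ℝ) (n : ℕ) :
    (2 : ℝ) ^ (a * n) * (2 : ℝ) ^ (-(b * n)) = (2 : ℝ) ^ (-((b - a) * n)) := by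
  rw [← Real.rpow_add two_pos]
  ring_nf

section ErrorExponent

variable {Ω : ℕ → Type*} [∀ n, MeasurableSpace (Ω n)] {P Q : ∀ n, Measure (Ω n)}

theorem le_Be2 {r E : ℝ} (h : rAchievable2 P Q r E) : (E : EReal) ≤ Be2 P Q r :=
  le_sSup ⟨E, h, rfl⟩

theorem Be2_le {r : ℝ} {b : EReal} (h : ∀ E, rAchievable2 P Q r E → (E : EReal) ≤ b) :
    Be2 P Q r ≤ b :=
  sSup_le <| by rintro _ ⟨E, hE, rfl⟩; exact h E hE

theorem Be2_antitone (P Q : ∀ n, Measure (Ω n)) : Antitone (Be2 P Q) := fun _ _ hrr' =>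
  Be2_le fun _ ⟨A, hA, hP, hQ⟩ => le_Be2 ⟨A, hA, (EReal.coe_le_coe_iff.2 hrr').trans hP, hQ⟩

/-- Here `b` bounds the divergence rate `(1/n) log₂ (dP/dQ)` on `S n`. -/
theorem Be2_le_of_restrict_le {S : ∀ n, Set (Ω n)} {C a b r : ℝ} (hC : 0 < C)
    (hPS : ∀ᶠ n : ℕ in atTop, ENNReal.ofReal (C * (2 : ℝ) ^ (-(a * n))) ≤ P n (S n))
    (hPQ : ∀ᶠ n : ℕ in atTop, (P n).restrict (S n) ≤ ENNReal.ofReal ((2 : ℝ) ^ (b * n)) • Q n)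
    (har : a < r) : Be2 P Q r ≤ ((a + b : ℝ) : EReal) := by
  refine Be2_le fun E ⟨A, _, hAP, hAQ⟩ => hAQ.trans (liminf_expRate2_le (half_pos hC) ?_)
  have hcompl : ∀ᶠ n : ℕ in atTop,
      P n (A n)ᶜ < ENNReal.ofReal (C / 2 * (2 : ℝ) ^ (-(a * n))) :=
    eventually_lt_of_lt_liminf_expRate2 (half_pos hC) ((EReal.coe_lt_coe_iff.2 har).trans_le hAP)
  filter_upwards [hPS, hPQ, hcompl] with n hPS hPQ hcompl
  set half := ENNReal.ofReal (C / 2 * (2 : ℝ) ^ (-(a * n))) with half_def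
  have hsum : half + half ≤ half + ENNReal.ofReal ((2 : ℝ) ^ (b * n)) * Q n (A n) :=
    calc half + half = ENNReal.ofReal (C * (2 : ℝ) ^ (-(a * n))) := by
          rw [half_def, ← ENNReal.ofReal_add (by positivity) (by positivity)]
          ring_nf
      _ ≤ P n (A n)ᶜ + ENNReal.ofReal ((2 : ℝ) ^ (b * n)) * Q n (A n) :=
          hPS.trans (measure_le_measure_compl_add_mul hPQ (A n))
      _ ≤ half + ENNReal.ofReal ((2 : ℝ) ^ (b * n)) * Q n (A n) := by gcongr
  have hhalf : half ≤ ENNReal.ofReal ((2 : ℝ) ^ (b * n)) * Q n (A n) :=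
    (ENNReal.add_le_add_iff_left ENNReal.ofReal_ne_top).1 hsum
  have hsplit : half = ENNReal.ofReal ((2 : ℝ) ^ (b * n)) *
      ENNReal.ofReal (C / 2 * (2 : ℝ) ^ (-((a + b) * n))) := by
    rw [half_def, ← ENNReal.ofReal_mul (by positivity), mul_left_comm, two_rpow_mul_two_rpow_neg,
      add_sub_cancel_right]
  rw [hsplit] at hhalf
  exact (ENNReal.mul_le_mul_iff_right (by positivity) ENNReal.ofReal_ne_top).1 hhalf

variable [∀ n, MeasurableSingletonClass (Ω n)]

theorem le_Be2_of_card_le {T : ∀ n, Finset (Ω n)} {C D α γ r : ℝ} (hC : 0 < C) (hD : 0 < D)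
    (hP : ∀ᶠ n : ℕ in atTop, P n (T n : Set (Ω n))ᶜ ≤ ENNReal.ofReal (C * (2 : ℝ) ^ (-(r * n))))
    (hcard : ∀ᶠ n : ℕ in atTop, ((T n).card : ℝ) ≤ D * (2 : ℝ) ^ (α * n))
    (hQ : ∀ᶠ n : ℕ in atTop, ∀ x ∈ T n, Q n {x} ≤ ENNReal.ofReal ((2 : ℝ) ^ (-(γ * n)))) :
    ((γ - α : ℝ) : EReal) ≤ Be2 P Q r := by
  refine le_Be2 ⟨fun n => T n, fun n => (T n).measurableSet, le_liminf_expRate2 hC hP,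
    le_liminf_expRate2 hD ?_⟩
  filter_upwards [hcard, hQ] with n hcard hQ
  calc Q n (T n) ≤ (T n).card • ENNReal.ofReal ((2 : ℝ) ^ (-(γ * n))) := by
        rw [← sum_measure_singleton]
        exact Finset.sum_le_card_nsmul _ _ _ hQ
    _ = ENNReal.ofReal ((T n).card * (2 : ℝ) ^ (-(γ * n))) := by
        rw [nsmul_eq_mul, ENNReal.ofReal_mul (Nat.cast_nonneg _), ENNReal.ofReal_natCast]
    _ ≤ ENNReal.ofReal (D * (2 : ℝ) ^ (α * n) * (2 : ℝ) ^ (-(γ * n))) := by gcongr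
    _ = ENNReal.ofReal (D * (2 : ℝ) ^ (-((γ - α) * n))) := by
        rw [mul_assoc, two_rpow_mul_two_rpow_neg]

theorem le_Be2_of_support_subset_insert_insert [∀ n, Countable (Ω n)] {S : ∀ n, Finset (Ω n)}
    {x₀ x₁ : ∀ n, Ω n} {D α γ r : ℝ} (hD : 0 < D) (hα : 0 ≤ α)
    (hcard : ∀ᶠ n : ℕ in atTop, ((S n).card : ℝ) ≤ D * (2 : ℝ) ^ (α * n))
    (hP : ∀ᶠ n : ℕ in atTop, ∀ x, x ∉ S n → x ≠ x₀ n → x ≠ x₁ n → P n {x} = 0)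
    (hQ : ∀ᶠ n : ℕ in atTop, ∀ x, Q n {x} ≤ ENNReal.ofReal ((2 : ℝ) ^ (-(γ * n)))) :
    ((γ - α : ℝ) : EReal) ≤ Be2 P Q r := by
  classical
  let T (n : ℕ) : Finset (Ω n) := insert (x₀ n) (insert (x₁ n) (S n))
  have hT_card : ∀ᶠ n : ℕ in atTop, ((T n).card : ℝ) ≤ (D + 2) * (2 : ℝ) ^ (α * n) := by
    filter_upwards [hcard] with n hcard
    have hT : ((T n).card : ℝ) ≤ (S n).card + 2 := by
      exact_mod_cast (Finset.card_insert_le _ _).trans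
        (Nat.succ_le_succ (Finset.card_insert_le _ _))
    have hpow : 1 ≤ (2 : ℝ) ^ (α * n) := Real.one_le_rpow one_le_two (by positivity)
    linarith
  have hT_compl : ∀ᶠ n : ℕ in atTop, P n (T n : Set (Ω n))ᶜ = 0 := by
    filter_upwards [hP] with n hP
    refine measure_eq_zero_of_measure_singleton_eq_zero (Set.to_countable _) fun x hx => ?_
    simp only [T, Set.mem_compl_iff, Finset.mem_coe, Finset.mem_insert, not_or] at hx
    exact hP x hx.2.2 hx.1 hx.2.1
  exact le_Be2_of_card_le one_pos (by positivity)
    (hT_compl.mono fun n hT => hT.trans_le zero_le) hT_card (hQ.mono fun n hQ x _ => hQ x)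

theorem le_Be2_of_measure_singleton_eq_one_sub [∀ n, IsProbabilityMeasure (P n)]
    {x₀ : ∀ n, Ω n} {t : ℕ → ℝ} {C γ r : ℝ} (hC : 0 < C)
    (hP : ∀ᶠ n : ℕ in atTop, P n {x₀ n} = ENNReal.ofReal (1 - t n))
    (ht : ∀ᶠ n : ℕ in atTop, t n ≤ C * (2 : ℝ) ^ (-(r * n)))
    (hQ : ∀ᶠ n : ℕ in atTop, Q n {x₀ n} ≤ ENNReal.ofReal ((2 : ℝ) ^ (-(γ * n)))) :
    (γ : EReal) ≤ Be2 P Q r := by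
  rw [← sub_zero γ]
  refine le_Be2_of_card_le (T := fun n => {x₀ n}) hC one_pos ?_ (by simp) (by simpa using hQ)
  filter_upwards [hP, ht] with n hP ht
  rw [Finset.coe_singleton]
  exact (prob_compl_le_of_measure_eq_one_sub (measurableSet_singleton _) hP).trans
    (ENNReal.ofReal_le_ofReal ht)

theorem Be2_le_of_le_card {S : ∀ n, Finset (Ω n)} {C α β γ r : ℝ} (hC : 0 < C)
    (hcard : ∀ᶠ n : ℕ in atTop, C * (2 : ℝ) ^ (α * n) ≤ (S n).card)
    (hP : ∀ᶠ n : ℕ in atTop, ∀ x ∈ S n, P n {x} = ENNReal.ofReal ((2 : ℝ) ^ (-(β * n))))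
    (hQ : ∀ᶠ n : ℕ in atTop, ∀ x ∈ S n, ENNReal.ofReal ((2 : ℝ) ^ (-(γ * n))) ≤ Q n {x})
    (hr : β - α < r) : Be2 P Q r ≤ ((γ - α : ℝ) : EReal) := by
  have hPS : ∀ᶠ n : ℕ in atTop,
      ENNReal.ofReal (C * (2 : ℝ) ^ (-((β - α) * n))) ≤ P n (S n : Set (Ω n)) := by
    filter_upwards [hcard, hP] with n hcard hP
    rw [← two_rpow_mul_two_rpow_neg, ← mul_assoc, ← sum_measure_singleton,
      Finset.sum_congr rfl hP, Finset.sum_const, nsmul_eq_mul, ← ENNReal.ofReal_natCast,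
      ← ENNReal.ofReal_mul (Nat.cast_nonneg _)]
    gcongr
  have hPQ : ∀ᶠ n : ℕ in atTop,
      (P n).restrict (S n) ≤ ENNReal.ofReal ((2 : ℝ) ^ ((γ - β) * n)) • Q n := by
    filter_upwards [hP, hQ] with n hP hQ
    refine restrict_le_of_measure_singleton_le (S n).countable_toSet fun x hx => ?_
    calc P n {x} = ENNReal.ofReal ((2 : ℝ) ^ ((γ - β) * n)) *
          ENNReal.ofReal ((2 : ℝ) ^ (-(γ * n))) := by
          rw [hP x hx, ← ENNReal.ofReal_mul (by positivity), two_rpow_mul_two_rpow_neg,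
            sub_sub_cancel]
      _ ≤ ENNReal.ofReal ((2 : ℝ) ^ ((γ - β) * n)) * Q n {x} := by gcongr; exact hQ x hx
  rw [← sub_add_sub_cancel' β α γ]
  exact Be2_le_of_restrict_le hC hPS hPQ hr

theorem Be2_le_of_le_measure_singleton [∀ n, Countable (Ω n)] [∀ n, IsProbabilityMeasure (P n)]
    {γ r : ℝ}
    (hQ : ∀ᶠ n : ℕ in atTop, ∀ x, ENNReal.ofReal ((2 : ℝ) ^ (-(γ * n))) ≤ Q n {x})
    (hr : 0 < r) : Be2 P Q r ≤ (γ : EReal) := by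
  rw [← zero_add γ]
  refine Be2_le_of_restrict_le (S := fun _ => Set.univ) one_pos (by simp) ?_ hr
  filter_upwards [hQ] with n hQ
  refine restrict_le_of_measure_singleton_le Set.countable_univ fun x _ => ?_
  calc P n {x} ≤ 1 := prob_le_one
    _ = ENNReal.ofReal ((2 : ℝ) ^ (γ * n)) * ENNReal.ofReal ((2 : ℝ) ^ (-(γ * n))) := by
        rw [← ENNReal.ofReal_mul (by positivity), two_rpow_mul_two_rpow_neg]
        simp
    _ ≤ ENNReal.ofReal ((2 : ℝ) ^ (γ * n)) * Q n {x} := by gcongr; exact hQ x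

end ErrorExponent

theorem eventually_floor_two_rpow_add_two_le {α : ℝ} (hα : α < 1) :
    ∀ᶠ n : ℕ in atTop, Nat.floor ((2 : ℝ) ^ (α * n)) + 2 ≤ 2 ^ n := by
  have hgap : Tendsto (fun n : ℕ => (1 - α) * (n : ℝ)) atTop atTop :=
    tendsto_natCast_atTop_atTop.const_mul_atTop (sub_pos.2 hα)
  filter_upwards [hgap.eventually_ge_atTop 1, eventually_ge_atTop 2] with n hn hn2
  have hhalf : (2 : ℝ) ^ (α * n) ≤ 2 ^ n / 2 :=
    calc (2 : ℝ) ^ (α * n) ≤ (2 : ℝ) ^ ((n : ℝ) - 1) :=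
          Real.rpow_le_rpow_of_exponent_le one_le_two (by linarith)
      _ = 2 ^ n / 2 := by rw [Real.rpow_sub_one two_ne_zero, Real.rpow_natCast]
  have hfour : (2 : ℝ) ^ 2 ≤ 2 ^ n := pow_le_pow_right₀ one_le_two hn2
  have hfloor : (Nat.floor ((2 : ℝ) ^ (α * n)) : ℝ) ≤ (2 : ℝ) ^ (α * n) :=
    Nat.floor_le (by positivity)
  have hreal : (Nat.floor ((2 : ℝ) ^ (α * n)) : ℝ) + 2 ≤ 2 ^ n := by linarith
  exact_mod_cast hreal

theorem floor_two_rpow_mul_add_two_rpow_le {α β δ : ℝ} (hδ : β - α ≤ δ) (n : ℕ) :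
    (Nat.floor ((2 : ℝ) ^ (α * n)) : ℝ) * (2 : ℝ) ^ (-(β * n)) + (2 : ℝ) ^ (-(δ * n)) ≤
      2 * (2 : ℝ) ^ (-((β - α) * n)) := by
  have hflat : (Nat.floor ((2 : ℝ) ^ (α * n)) : ℝ) * (2 : ℝ) ^ (-(β * n)) ≤
      (2 : ℝ) ^ (-((β - α) * n)) := by
    rw [← two_rpow_mul_two_rpow_neg]
    gcongr
    exact Nat.floor_le (by positivity)
  have hatom : (2 : ℝ) ^ (-(δ * n)) ≤ (2 : ℝ) ^ (-((β - α) * n)) := by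
    gcongr
    exact one_le_two
  linarith

theorem discontinuous_spectrum_error_exponent_general {Ω : ℕ → Type*}
    [∀ n, MeasurableSpace (Ω n)] [∀ n, MeasurableSingletonClass (Ω n)] [∀ n, Countable (Ω n)]
    {α β γ δ : ℝ} (hα : 0 ≤ α) (hδ : β - α ≤ δ) {S : ∀ n, Finset (Ω n)} {x₀ x₁ : ∀ n, Ω n}
    {P Q : ∀ n, Measure (Ω n)} [∀ n, IsProbabilityMeasure (P n)]
    (hcard : ∀ᶠ n : ℕ in atTop, (S n).card = Nat.floor ((2 : ℝ) ^ (α * n)))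
    (hPS : ∀ᶠ n : ℕ in atTop, ∀ x ∈ S n, P n {x} = ENNReal.ofReal ((2 : ℝ) ^ (-(β * n))))
    (hPx₀ : ∀ᶠ n : ℕ in atTop, P n {x₀ n} = ENNReal.ofReal
      (1 - (Nat.floor ((2 : ℝ) ^ (α * n)) : ℝ) * (2 : ℝ) ^ (-(β * n)) - (2 : ℝ) ^ (-(δ * n))))
    (hP0 : ∀ᶠ n : ℕ in atTop, ∀ x, x ∉ S n → x ≠ x₀ n → x ≠ x₁ n → P n {x} = 0)
    (hQ : ∀ᶠ n : ℕ in atTop, ∀ x, Q n {x} = ENNReal.ofReal ((2 : ℝ) ^ (-(γ * n))))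
    {r : ℝ} (hr : 0 < r) :
    Be2 P Q r = if β - α < r then ((γ - α : ℝ) : EReal) else (γ : EReal) := by
  have hQ_le : ∀ᶠ n : ℕ in atTop, ∀ x, Q n {x} ≤ ENNReal.ofReal ((2 : ℝ) ^ (-(γ * n))) :=
    hQ.mono fun n hQ x => (hQ x).le
  have hQ_ge : ∀ᶠ n : ℕ in atTop, ∀ x, ENNReal.ofReal ((2 : ℝ) ^ (-(γ * n))) ≤ Q n {x} :=
    hQ.mono fun n hQ x => (hQ x).ge
  split_ifs with hαr
  · have hcard_le : ∀ᶠ n : ℕ in atTop, ((S n).card : ℝ) ≤ 1 * (2 : ℝ) ^ (α * n) := by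
      filter_upwards [hcard] with n hcard
      rw [hcard, one_mul]
      exact Nat.floor_le (by positivity)
    have hle_card : ∀ᶠ n : ℕ in atTop, 1 / 2 * (2 : ℝ) ^ (α * n) ≤ (S n).card := by
      filter_upwards [hcard] with n hcard
      have hpow : 1 ≤ (2 : ℝ) ^ (α * n) := Real.one_le_rpow one_le_two (by positivity)
      rw [hcard, one_div_mul_eq_div]
      exact (Nat.div_two_lt_floor hpow).le
    exact le_antisymm
      (Be2_le_of_le_card one_half_pos hle_card hPS (hQ_ge.mono fun n hQ x _ => hQ x) hαr)
      (le_Be2_of_support_subset_insert_insert one_pos hα hcard_le hP0 hQ_le)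
  · simp only [sub_sub] at hPx₀
    exact le_antisymm (Be2_le_of_le_measure_singleton hQ_ge hr)
      ((le_Be2_of_measure_singleton_eq_one_sub two_pos hPx₀
        (.of_forall (floor_two_rpow_mul_add_two_rpow_le hδ)) (hQ_le.mono fun n hQ => hQ _)).trans
        (Be2_antitone P Q (not_lt.1 hαr)))

/-- Example 3.6 (eq. (3.47)): a null hypothesis with discontinuous divergence spectrum
against the uniform alternative on `{0,1}ⁿ`. With base-2 exponents,
`B_e(r) = 1 - α` for `r > α` and `B_e(r) = 1` for `0 < r ≤ α`. -/
theorem discontinuous_spectrum_error_exponent (α : ℝ) (hα0 : 0 < α) (hα1 : α < 1)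
    (S : ∀ n : ℕ, Finset (Fin n → Bool)) (x₀ x₁ : ∀ n : ℕ, Fin n → Bool)
    (P Q : ∀ n : ℕ, Measure (Fin n → Bool))
    [∀ n, IsProbabilityMeasure (P n)] [∀ n, IsProbabilityMeasure (Q n)]
    (hcard : ∀ n : ℕ, Nat.floor ((2 : ℝ) ^ (α * n)) + 2 ≤ 2 ^ n →
      (S n).card = Nat.floor ((2 : ℝ) ^ (α * n)))
    (hx₀ : ∀ n : ℕ, Nat.floor ((2 : ℝ) ^ (α * n)) + 2 ≤ 2 ^ n → x₀ n ∉ S n)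
    (hx₁ : ∀ n : ℕ, Nat.floor ((2 : ℝ) ^ (α * n)) + 2 ≤ 2 ^ n → x₁ n ∉ S n)
    (hne : ∀ n : ℕ, Nat.floor ((2 : ℝ) ^ (α * n)) + 2 ≤ 2 ^ n → x₀ n ≠ x₁ n)
    (hPS : ∀ n : ℕ, Nat.floor ((2 : ℝ) ^ (α * n)) + 2 ≤ 2 ^ n →
      ∀ x ∈ S n, (P n) {x} = ENNReal.ofReal ((2 : ℝ) ^ (-(2 * α * n))))
    (hPx₁ : ∀ n : ℕ, Nat.floor ((2 : ℝ) ^ (α * n)) + 2 ≤ 2 ^ n →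
      (P n) {x₁ n} = ENNReal.ofReal ((2 : ℝ) ^ (-(3 * α * n))))
    (hPx₀ : ∀ n : ℕ, Nat.floor ((2 : ℝ) ^ (α * n)) + 2 ≤ 2 ^ n →
      (P n) {x₀ n} = ENNReal.ofReal
        (1 - (Nat.floor ((2 : ℝ) ^ (α * n)) : ℝ) * (2 : ℝ) ^ (-(2 * α * n))
          - (2 : ℝ) ^ (-(3 * α * n))))
    (hP0 : ∀ n : ℕ, Nat.floor ((2 : ℝ) ^ (α * n)) + 2 ≤ 2 ^ n →
      ∀ x : Fin n → Bool, x ∉ S n → x ≠ x₀ n → x ≠ x₁ n → (P n) {x} = 0)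
    (hQ : ∀ (n : ℕ) (x : Fin n → Bool), (Q n) {x} = ENNReal.ofReal ((2 : ℝ) ^ (-(n : ℝ))))
    (r : ℝ) (hr : 0 < r) :
    Be2 P Q r = if α < r then (((1 - α : ℝ)) : EReal) else (1 : EReal) := by
  have hadm := eventually_floor_two_rpow_add_two_le hα1
  simpa [show 2 * α - α = α by ring] using discontinuous_spectrum_error_exponent_general
    (β := 2 * α) (γ := 1) (δ := 3 * α) hα0.le (by linarith) (hadm.mono hcard) (hadm.mono hPS)
    (hadm.mono hPx₀) (hadm.mono hP0) (.of_forall fun n x => by simpa using hQ n x) hr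
end
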